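/- Assume conditions (A) and (B). Then for any c > 0, the sequence F_k(z,t) = g_k^{∘⌊γ_k t⌋}(z) converges uniformly on [0, e^{−c}] × [0, c] as k → ∞ to a function F(z,t), and the limit function satisfies the integral equation F(z,t) = z + ∫₀ᵗ u(F(z,r)) dr for all (z,t) ∈ [0, e^{−c}] × [0, c] (so F solves ∂F/∂t = u(F), F(z,0) = z). -/

import Mathlib

open Filter Set

/-- The probability generating function of a distribution `p` on `ℕ`. -/
noncomputable def pgf (p : ℕ → ℝ) (z : ℝ) : ℝ := ∑' j, p j * z ^ j

/-!
An orbit `X(t) = f^{∘⌊γ t⌋}(x)` is an explicit Euler scheme with step `1 / γ` for the vector field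
`U(y) = γ (f(y) - y)`: up to the size of one step it satisfies `X(t) = x + ∫₀ᵗ U(X(s)) ds`. When two
such fields are close to the same Lipschitz field `u`, subtracting the integral equations and
applying Grönwall's inequality shows that the two orbits are close. The schemes are therefore
uniformly Cauchy, and the integral equation for the limit follows by dominated convergence. Since
only the orbits are compared, the state space need not be convex and no solution of `∂F/∂t = u(F)`
has to be constructed beforehand.
-/

open MeasureTheory Topology
open scoped NNReal

section PointwiseLimits

variable {ι : Type*} {l : Filter ι}

theorem tendstoUniformlyOn_of_equicontinuousOn {X α : Type*} [TopologicalSpace X]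
    [UniformSpace α] {F : ι → X → α} {f : X → α} {K : Set X} (hK : IsCompact K)
    (hF : EquicontinuousOn F K) (hlim : ∀ x ∈ K, Tendsto (F · x) l (𝓝 (f x))) :
    TendstoUniformlyOn F f l K := by
  have hiff := EquicontinuousOn.tendsto_uniformOnFun_iff_pi' (𝔖 := {K}) (by simpa) (by simpa) l f
  refine UniformOnFun.tendsto_iff_tendstoUniformlyOn.1 (hiff.2 (tendsto_pi_nhds.2 ?_)) K rfl
  exact fun x => hlim x (by simpa using! x.2)

theorem lipschitzOnWith_of_tendsto {X Y : Type*} [PseudoEMetricSpace X] [PseudoEMetricSpace Y]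
    [l.NeBot] {L : ℝ≥0} {F : ι → X → Y} {g : X → Y} {s : Set X}
    (hF : ∀ k, LipschitzOnWith L (F k) s) (hlim : ∀ x ∈ s, Tendsto (F · x) l (𝓝 (g x))) :
    LipschitzOnWith L g s :=
  fun x hx y hy => le_of_tendsto ((hlim x hx).edist (hlim y hy)) (.of_forall fun k => hF k hx hy)

end PointwiseLimits

section StepFunctions

variable {E : Type*} [NormedAddCommGroup E]

theorem tendsto_nat_floor_right_pure {R : Type*} [Ring R] [LinearOrder R] [FloorRing R]
    [TopologicalSpace R] [OrderClosedTopology R] (t : R) :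
    Tendsto (fun s : R => ⌊s⌋₊) (𝓝[≥] t) (pure ⌊t⌋₊) :=
  (tendsto_pure_pure Int.toNat ⌊t⌋).comp (tendsto_floor_right_pure_floor t)

theorem intervalIntegrable_comp_floor (G : ℕ → E) (a b : ℝ) :
    IntervalIntegrable (fun s => G ⌊s⌋₊) volume a b := by
  have hmeas : StronglyMeasurable fun s : ℝ => G ⌊s⌋₊ :=
    StronglyMeasurable.of_discrete.comp_measurable Nat.measurable_floor
  refine (intervalIntegrable_const
    (c := ∑ i ∈ Finset.range (⌊max a b⌋₊ + 1), ‖G i‖)).mono_fun' hmeas.aestronglyMeasurable ?_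
  filter_upwards [ae_restrict_mem measurableSet_uIoc] with s hs
  exact Finset.single_le_sum (f := fun i => ‖G i‖) (fun _ _ => norm_nonneg _)
    (Finset.mem_range_succ_iff.2 (Nat.floor_mono hs.2))

variable [NormedSpace ℝ E] [CompleteSpace E]

theorem integral_comp_floor_of_le_add_one (G : ℕ → E) {n : ℕ} {t : ℝ} (hnt : n ≤ t)
    (htn : t ≤ n + 1) : ∫ s in n..t, G ⌊s⌋₊ = (t - n) • G n := by
  rw [← intervalIntegral.integral_const]
  refine intervalIntegral.integral_congr_Ioo_of_le hnt fun s hs => ?_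
  exact congrArg G (Nat.floor_eq_on_Ico n s ⟨hs.1.le, hs.2.trans_le htn⟩)

theorem integral_comp_floor (G : ℕ → E) {t : ℝ} (ht : 0 ≤ t) :
    ∫ s in 0..t, G ⌊s⌋₊ = ∑ i ∈ Finset.range ⌊t⌋₊, G i + (t - ⌊t⌋₊) • G ⌊t⌋₊ := by
  have hwhole : ∫ s in 0..(⌊t⌋₊ : ℝ), G ⌊s⌋₊ = ∑ i ∈ Finset.range ⌊t⌋₊, G i := by
    rw [← Nat.cast_zero, ← intervalIntegral.sum_integral_adjacent_intervals
      (a := fun i : ℕ => (i : ℝ)) fun i _ => intervalIntegrable_comp_floor G _ _]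
    refine Finset.sum_congr rfl fun i _ => ?_
    simpa using integral_comp_floor_of_le_add_one G (n := i) (t := (i + 1 : ℕ)) (by simp) (by simp)
  rw [← intervalIntegral.integral_add_adjacent_intervals (b := (⌊t⌋₊ : ℝ))
    (intervalIntegrable_comp_floor G _ _) (intervalIntegrable_comp_floor G _ _), hwhole,
    integral_comp_floor_of_le_add_one G (Nat.floor_le ht) (Nat.lt_floor_add_one t).le]

end StepFunctions

section RescaledIterates

/-- The orbit `t ↦ f^{∘⌊γ t⌋}(x)` of a self-map `f`, run at `γ` iterations per unit of time. It is
constant, equal to `x`, at times with `γ t ≤ 0`. -/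
noncomputable def rescaledIterate {α : Type*} (γ : ℝ) (f : α → α) (x : α) (t : ℝ) : α :=
  f^[⌊γ * t⌋₊] x

variable {α : Type*} {E : Type*} [NormedAddCommGroup E]

theorem rescaledIterate_mem {f : α → α} {K : Set α} (hf : MapsTo f K K) {x : α} (hx : x ∈ K)
    (γ t : ℝ) : rescaledIterate γ f x t ∈ K :=
  hf.iterate _ hx

theorem continuousWithinAt_comp_rescaledIterate {β : Type*} [TopologicalSpace β] {γ : ℝ}
    (hγ : 0 ≤ γ) (g : α → β) (f : α → α) (x : α) (t : ℝ) :
    ContinuousWithinAt (fun s => g (rescaledIterate γ f x s)) (Ici t) t := by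
  have hscale : Tendsto (fun s => γ * s) (𝓝[≥] t) (𝓝[≥] (γ * t)) :=
    (continuous_const_mul γ).continuousWithinAt.tendsto_nhdsWithin fun _ hs =>
      mul_le_mul_of_nonneg_left hs hγ
  have hfloor := (tendsto_nat_floor_right_pure (γ * t)).comp hscale
  exact ((tendsto_pure_pure (fun n => g (f^[n] x)) _).comp hfloor).mono_right (pure_le_nhds _)

theorem intervalIntegrable_comp_rescaledIterate (g : α → E) (γ : ℝ) (f : α → α) (x : α)
    (a b : ℝ) : IntervalIntegrable (fun s => g (rescaledIterate γ f x s)) volume a b := by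
  rcases eq_or_ne γ 0 with rfl | hγ
  · simp [rescaledIterate]
  · have hfloor := intervalIntegrable_comp_floor (fun n => g (f^[n] x)) (γ * a) (γ * b)
    simpa [hγ] using! hfloor.comp_mul_left (c := γ)

variable [NormedSpace ℝ E]

/-- The rescaled increment `U(y) = γ (f(y) - y)` of a self-map `f`: the vector field for which `f`
is one explicit Euler step of length `1 / γ`. -/
def rescaledIncrement (γ : ℝ) (f : E → E) (y : E) : E := γ • (f y - y)

theorem integral_rescaledIncrement_rescaledIterate [CompleteSpace E] {γ t : ℝ} (hγ : 0 < γ)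
    (f : E → E) (x : E) (ht : 0 ≤ t) :
    ∫ s in 0..t, rescaledIncrement γ f (rescaledIterate γ f x s) =
      rescaledIterate γ f x t - x +
        (γ * t - ⌊γ * t⌋₊) • (f (rescaledIterate γ f x t) - rescaledIterate γ f x t) := by
  set G : ℕ → E := fun n => f (f^[n] x) - f^[n] x with hG
  have htelescope : ∑ i ∈ Finset.range ⌊γ * t⌋₊, G i = f^[⌊γ * t⌋₊] x - x := by
    simpa only [hG, Function.iterate_succ_apply'] using!
      Finset.sum_range_sub (fun n => f^[n] x) ⌊γ * t⌋₊
  calc ∫ s in 0..t, rescaledIncrement γ f (rescaledIterate γ f x s)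
      = γ • ∫ s in 0..t, G ⌊γ * s⌋₊ := intervalIntegral.integral_smul _ _
    _ = ∫ s in 0..γ * t, G ⌊s⌋₊ := by
      rw [intervalIntegral.smul_integral_comp_mul_left (fun s => G ⌊s⌋₊), mul_zero]
    _ = _ := by
      rw [integral_comp_floor G (by positivity), htelescope]; rfl

end RescaledIterates

section Gronwall

variable {E : Type*} [NormedAddCommGroup E] [NormedSpace ℝ E] [CompleteSpace E]

theorem norm_integral_le_gronwallBound {W : ℝ → E} {K ε a b : ℝ} (hab : a ≤ b)
    (hint : IntervalIntegrable W volume a b)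
    (hright : ∀ t ∈ Ico a b, ContinuousWithinAt W (Ici t) t)
    (hbound : ∀ t ∈ Ico a b, ‖W t‖ ≤ K * ‖∫ s in a..t, W s‖ + ε) :
    ‖∫ s in a..b, W s‖ ≤ gronwallBound 0 K ε (b - a) := by
  refine norm_le_gronwallBound_of_norm_deriv_right_le (f := fun t => ∫ s in a..t, W s) (f' := W)
    ?_ (fun t ht => ?_) (by simp) hbound b ⟨hab, le_rfl⟩
  · simpa only [uIcc_of_le hab] using
      intervalIntegral.continuousOn_primitive_interval' hint left_mem_uIcc
  · have hsub : uIcc a t ⊆ uIcc a b := by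
      rw [uIcc_of_le ht.1, uIcc_of_le hab]; exact Icc_subset_Icc_right ht.2.le
    exact intervalIntegral.integral_hasDerivWithinAt_right (t := Ioi t) (hint.mono_set hsub)
      ⟨Ioc a b, mem_of_superset (Ioc_mem_nhdsGT ht.2) (Ioc_subset_Ioc_left ht.1),
        hint.1.aestronglyMeasurable⟩ ((hright t ht).mono Ioi_subset_Ici_self)

end Gronwall

section EulerMaps

variable {E : Type*} [NormedAddCommGroup E] [NormedSpace ℝ E]

/-- `f` is, up to the error `ε`, one explicit Euler step of length `1 / γ` for the vector field `u`
on `K`: it preserves `K`, its rescaled increment is `ε`-close to `u`, and it moves points by at most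
`ε`. -/
structure IsApproxEulerMap (u : E → E) (K : Set E) (ε γ : ℝ) (f : E → E) : Prop where
  pos : 0 < γ
  mapsTo : MapsTo f K K
  norm_rescaledIncrement_sub_le : ∀ y ∈ K, ‖rescaledIncrement γ f y - u y‖ ≤ ε
  norm_sub_le : ∀ y ∈ K, ‖f y - y‖ ≤ ε

namespace IsApproxEulerMap

variable {u : E → E} {K : Set E} {ε γ γ₁ γ₂ : ℝ} {f f₁ f₂ : E → E} {x : E} {t : ℝ}

theorem norm_le (hf : IsApproxEulerMap u K ε γ f) {y : E} (hy : y ∈ K) : ‖u y‖ ≤ γ * ε + ε := by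
  have hincrement : ‖rescaledIncrement γ f y‖ ≤ γ * ε := by
    rw [rescaledIncrement, norm_smul_of_nonneg hf.pos.le]
    exact mul_le_mul_of_nonneg_left (hf.norm_sub_le y hy) hf.pos.le
  calc ‖u y‖ = ‖rescaledIncrement γ f y - (rescaledIncrement γ f y - u y)‖ := by
        rw [sub_sub_cancel]
    _ ≤ γ * ε + ε :=
      norm_sub_le_of_le hincrement (hf.norm_rescaledIncrement_sub_le y hy)

theorem norm_rescaledIterate_sub_integral_le [CompleteSpace E] (hf : IsApproxEulerMap u K ε γ f)
    (hx : x ∈ K) (ht : 0 ≤ t) :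
    ‖rescaledIterate γ f x t -
      (x + ∫ s in 0..t, rescaledIncrement γ f (rescaledIterate γ f x s))‖ ≤ ε := by
  have hfract_nonneg : 0 ≤ γ * t - ⌊γ * t⌋₊ :=
    sub_nonneg.2 (Nat.floor_le (mul_nonneg hf.pos.le ht))
  have hfract_le : γ * t - ⌊γ * t⌋₊ ≤ 1 := by linarith [Nat.lt_floor_add_one (γ * t)]
  rw [integral_rescaledIncrement_rescaledIterate hf.pos f x ht, ← add_assoc, add_sub_cancel,
    sub_add_cancel_left, norm_neg, norm_smul_of_nonneg hfract_nonneg]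
  exact (mul_le_of_le_one_left (norm_nonneg _) hfract_le).trans
    (hf.norm_sub_le _ (rescaledIterate_mem hf.mapsTo hx γ t))

theorem norm_rescaledIncrement_sub_rescaledIncrement_le {L : ℝ≥0} (hu : LipschitzOnWith L u K)
    (h₁ : IsApproxEulerMap u K ε γ₁ f₁) (h₂ : IsApproxEulerMap u K ε γ₂ f₂) {y₁ y₂ : E}
    (hy₁ : y₁ ∈ K) (hy₂ : y₂ ∈ K) :
    ‖rescaledIncrement γ₁ f₁ y₁ - rescaledIncrement γ₂ f₂ y₂‖ ≤ L * ‖y₁ - y₂‖ + 2 * ε := by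
  have hdecomp : rescaledIncrement γ₁ f₁ y₁ - rescaledIncrement γ₂ f₂ y₂ =
      (rescaledIncrement γ₁ f₁ y₁ - u y₁) + (u y₁ - u y₂) -
        (rescaledIncrement γ₂ f₂ y₂ - u y₂) := by abel
  rw [hdecomp]
  refine (norm_sub_le_of_le (norm_add_le_of_le (h₁.norm_rescaledIncrement_sub_le y₁ hy₁)
    (hu.norm_sub_le hy₁ hy₂)) (h₂.norm_rescaledIncrement_sub_le y₂ hy₂)).trans_eq ?_
  ring

theorem norm_rescaledIterate_sub_rescaledIterate_le_norm_integral [CompleteSpace E]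
    (h₁ : IsApproxEulerMap u K ε γ₁ f₁) (h₂ : IsApproxEulerMap u K ε γ₂ f₂) (hx : x ∈ K)
    (ht : 0 ≤ t) :
    ‖rescaledIterate γ₁ f₁ x t - rescaledIterate γ₂ f₂ x t‖ ≤
      ‖∫ s in 0..t, (rescaledIncrement γ₁ f₁ (rescaledIterate γ₁ f₁ x s) -
        rescaledIncrement γ₂ f₂ (rescaledIterate γ₂ f₂ x s))‖ + 2 * ε := by
  have herr₁ := h₁.norm_rescaledIterate_sub_integral_le hx ht
  have herr₂ := h₂.norm_rescaledIterate_sub_integral_le hx ht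
  rw [intervalIntegral.integral_sub (intervalIntegrable_comp_rescaledIterate _ _ _ _ _ _)
    (intervalIntegrable_comp_rescaledIterate _ _ _ _ _ _)]
  set X₁ := rescaledIterate γ₁ f₁ x
  set X₂ := rescaledIterate γ₂ f₂ x
  set I₁ := ∫ s in 0..t, rescaledIncrement γ₁ f₁ (X₁ s)
  set I₂ := ∫ s in 0..t, rescaledIncrement γ₂ f₂ (X₂ s)
  have hdecomp : X₁ t - X₂ t = (I₁ - I₂) + (X₁ t - (x + I₁)) - (X₂ t - (x + I₂)) := by abel
  rw [hdecomp]
  exact (norm_sub_le_of_le (norm_add_le_of_le le_rfl herr₁) herr₂).trans_eq (by ring)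

theorem norm_rescaledIterate_sub_rescaledIterate_le [CompleteSpace E] {L : ℝ≥0}
    (hu : LipschitzOnWith L u K) (h₁ : IsApproxEulerMap u K ε γ₁ f₁)
    (h₂ : IsApproxEulerMap u K ε γ₂ f₂) (hx : x ∈ K) (ht : 0 ≤ t) :
    ‖rescaledIterate γ₁ f₁ x t - rescaledIterate γ₂ f₂ x t‖ ≤
      gronwallBound 0 L (2 * (L + 1) * ε) t + 2 * ε := by
  set X₁ := rescaledIterate γ₁ f₁ x
  set X₂ := rescaledIterate γ₂ f₂ x
  set W : ℝ → E := fun s => rescaledIncrement γ₁ f₁ (X₁ s) - rescaledIncrement γ₂ f₂ (X₂ s)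
  have horbits : ∀ s, 0 ≤ s → ‖X₁ s - X₂ s‖ ≤ ‖∫ r in 0..s, W r‖ + 2 * ε := fun s hs =>
    h₁.norm_rescaledIterate_sub_rescaledIterate_le_norm_integral h₂ hx hs
  have hfield : ∀ s, 0 ≤ s → ‖W s‖ ≤ L * ‖∫ r in 0..s, W r‖ + 2 * (L + 1) * ε := fun s hs =>
    calc ‖W s‖ ≤ L * ‖X₁ s - X₂ s‖ + 2 * ε :=
          norm_rescaledIncrement_sub_rescaledIncrement_le hu h₁ h₂
            (rescaledIterate_mem h₁.mapsTo hx γ₁ s) (rescaledIterate_mem h₂.mapsTo hx γ₂ s)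
      _ ≤ L * (‖∫ r in 0..s, W r‖ + 2 * ε) + 2 * ε := by gcongr; exact horbits s hs
      _ = L * ‖∫ r in 0..s, W r‖ + 2 * (L + 1) * ε := by ring
  have hgronwall : ‖∫ r in 0..t, W r‖ ≤ gronwallBound 0 L (2 * (L + 1) * ε) (t - 0) :=
    norm_integral_le_gronwallBound ht
      ((intervalIntegrable_comp_rescaledIterate _ _ _ _ _ _).sub
        (intervalIntegrable_comp_rescaledIterate _ _ _ _ _ _))
      (fun s _ => (continuousWithinAt_comp_rescaledIterate h₁.pos.le _ f₁ x s).sub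
        (continuousWithinAt_comp_rescaledIterate h₂.pos.le _ f₂ x s))
      fun s hs => hfield s hs.1
  rw [sub_zero] at hgronwall
  exact (horbits t ht).trans (add_le_add_left hgronwall _)

end IsApproxEulerMap

variable {ι : Type*} {l : Filter ι} {u : E → E} {K : Set E} {L : ℝ≥0} {γ : ι → ℝ} {f : ι → E → E}

theorem uniformCauchySeqOn_rescaledIterate [CompleteSpace E] (hu : LipschitzOnWith L u K)
    (hf : ∀ ε > 0, ∀ᶠ k in l, IsApproxEulerMap u K ε (γ k) (f k)) (c : ℝ) :
    UniformCauchySeqOn (fun k (xt : E × ℝ) => rescaledIterate (γ k) (f k) xt.1 xt.2) l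
      (K ×ˢ Icc 0 c) := by
  intro V hV
  obtain ⟨δ, hδ, hδV⟩ := Metric.mem_uniformity_dist.1 hV
  have hbound : Tendsto (fun ε => gronwallBound 0 L (2 * (L + 1) * ε) c + 2 * ε) (𝓝[>] 0)
      (𝓝 0) := by
    have hcont : Continuous fun ε => gronwallBound 0 L (2 * (L + 1) * ε) c + 2 * ε :=
      ((gronwallBound_continuous_ε 0 L c).comp (continuous_const_mul _)).add
        (continuous_const_mul 2)
    simpa [gronwallBound_ε0_δ0] using (hcont.tendsto 0).mono_left nhdsWithin_le_nhds
  obtain ⟨ε, hεδ, hε⟩ :=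
    ((hbound.eventually_lt_const hδ).and eventually_mem_nhdsWithin).exists
  rw [mem_Ioi] at hε
  filter_upwards [(hf ε hε).prod_mk (hf ε hε)] with k hk xt hxt
  refine hδV ?_
  calc dist (rescaledIterate (γ k.1) (f k.1) xt.1 xt.2) (rescaledIterate (γ k.2) (f k.2) xt.1 xt.2)
      ≤ gronwallBound 0 L (2 * (L + 1) * ε) xt.2 + 2 * ε := by
        rw [dist_eq_norm]
        exact hk.1.norm_rescaledIterate_sub_rescaledIterate_le hu hk.2 hxt.1 hxt.2.1
    _ ≤ gronwallBound 0 L (2 * (L + 1) * ε) c + 2 * ε := by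
        gcongr; exact gronwallBound_mono le_rfl (by positivity) L.2 hxt.2.2
    _ < δ := hεδ

theorem tendsto_rescaledIncrement (hu : ContinuousOn u K)
    (hf : ∀ ε > 0, ∀ᶠ k in l, IsApproxEulerMap u K ε (γ k) (f k)) {y : ι → E} {y₀ : E}
    (hy₀ : y₀ ∈ K) (hyK : ∀ᶠ k in l, y k ∈ K) (hy : Tendsto y l (𝓝 y₀)) :
    Tendsto (fun k => rescaledIncrement (γ k) (f k) (y k)) l (𝓝 (u y₀)) := by
  have huy : Tendsto (fun k => u (y k)) l (𝓝 (u y₀)) :=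
    (hu y₀ hy₀).tendsto.comp (tendsto_nhdsWithin_iff.2 ⟨hy, hyK⟩)
  refine huy.congr_dist (Metric.tendsto_nhds.2 fun ε hε => ?_)
  filter_upwards [hf (ε / 2) (half_pos hε), hyK] with k hk hkK
  rw [Real.dist_0_eq_abs, abs_of_nonneg dist_nonneg, dist_comm, dist_eq_norm]
  exact (hk.norm_rescaledIncrement_sub_le _ hkK).trans_lt (half_lt_self hε)

theorem tendsto_integral_rescaledIncrement_rescaledIterate [l.NeBot] [l.IsCountablyGenerated]
    (hK : IsClosed K) (hu : ContinuousOn u K)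
    (hf : ∀ ε > 0, ∀ᶠ k in l, IsApproxEulerMap u K ε (γ k) (f k)) {x : E} (hx : x ∈ K)
    {X : ℝ → E} {a b : ℝ}
    (hX : ∀ s ∈ uIcc a b, Tendsto (fun k => rescaledIterate (γ k) (f k) x s) l (𝓝 (X s))) :
    Tendsto (fun k => ∫ s in a..b,
      rescaledIncrement (γ k) (f k) (rescaledIterate (γ k) (f k) x s)) l
      (𝓝 (∫ s in a..b, u (X s))) := by
  obtain ⟨M, hM⟩ : ∃ M, ∀ y ∈ K, ‖u y‖ ≤ M :=
    let ⟨_, hk⟩ := (hf 1 one_pos).exists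
    ⟨_, fun _ => hk.norm_le⟩
  have hmem : ∀ s, ∀ᶠ k in l, rescaledIterate (γ k) (f k) x s ∈ K := fun s =>
    (hf 1 one_pos).mono fun k hk => rescaledIterate_mem hk.mapsTo hx (γ k) s
  refine intervalIntegral.tendsto_integral_filter_of_dominated_convergence (fun _ => M + 1)
    (.of_forall fun k => ?_) ?_ intervalIntegrable_const (.of_forall fun s hs => ?_)
  · exact (intervalIntegrable_comp_rescaledIterate _ _ _ _ _ _).aestronglyMeasurable_restrict_uIoc
  · filter_upwards [hf 1 one_pos] with k hk
    refine .of_forall fun s _ => ?_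
    have hsK := rescaledIterate_mem hk.mapsTo hx (γ k) s
    exact (norm_le_norm_add_norm_sub' _ _).trans
      (add_le_add (hM _ hsK) (hk.norm_rescaledIncrement_sub_le _ hsK))
  · have hXs := hX s (uIoc_subset_uIcc hs)
    exact tendsto_rescaledIncrement hu hf (hK.mem_of_tendsto hXs (hmem s)) (hmem s) hXs

theorem eq_add_integral_of_tendsto_rescaledIterate [CompleteSpace E] [l.NeBot]
    [l.IsCountablyGenerated] (hK : IsClosed K) (hu : ContinuousOn u K)
    (hf : ∀ ε > 0, ∀ᶠ k in l, IsApproxEulerMap u K ε (γ k) (f k)) {x : E} (hx : x ∈ K)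
    {X : ℝ → E} {t : ℝ} (ht : 0 ≤ t)
    (hX : ∀ s ∈ Icc 0 t, Tendsto (fun k => rescaledIterate (γ k) (f k) x s) l (𝓝 (X s))) :
    X t = x + ∫ s in 0..t, u (X s) := by
  have hintegral := tendsto_integral_rescaledIncrement_rescaledIterate hK hu hf hx
    (a := 0) (b := t) (by rwa [uIcc_of_le ht])
  refine tendsto_nhds_unique (hX t ⟨ht, le_rfl⟩)
    ((hintegral.const_add x).congr_dist (Metric.tendsto_nhds.2 fun ε hε => ?_))
  filter_upwards [hf (ε / 2) (half_pos hε)] with k hk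
  rw [Real.dist_0_eq_abs, abs_of_nonneg dist_nonneg, dist_comm, dist_eq_norm]
  exact (hk.norm_rescaledIterate_sub_integral_le hx ht).trans_lt (half_lt_self hε)

theorem exists_tendstoUniformlyOn_rescaledIterate [CompleteSpace E] [l.NeBot]
    [l.IsCountablyGenerated] (hK : IsClosed K) (hu : LipschitzOnWith L u K)
    (hf : ∀ ε > 0, ∀ᶠ k in l, IsApproxEulerMap u K ε (γ k) (f k)) :
    ∃ F : E × ℝ → E,
      (∀ c, TendstoUniformlyOn (fun k (xt : E × ℝ) => rescaledIterate (γ k) (f k) xt.1 xt.2) F l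
        (K ×ˢ Icc 0 c)) ∧
      ∀ x ∈ K, ∀ t, 0 ≤ t → F (x, t) = x + ∫ s in 0..t, u (F (x, s)) := by
  have hcauchy := uniformCauchySeqOn_rescaledIterate hu hf
  have hlim : ∀ xt ∈ K ×ˢ Ici (0 : ℝ), ∃ y,
      Tendsto (fun k => rescaledIterate (γ k) (f k) xt.1 xt.2) l (𝓝 y) := fun xt hxt =>
    cauchy_map_iff_exists_tendsto.1 ((hcauchy xt.2).cauchy_map ⟨hxt.1, hxt.2, le_rfl⟩)
  choose! F hF using hlim
  refine ⟨F, fun c => (hcauchy c).tendstoUniformlyOn_of_tendsto fun xt hxt =>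
    hF xt ⟨hxt.1, hxt.2.1⟩, fun x hx t ht => ?_⟩
  exact eq_add_integral_of_tendsto_rescaledIterate hK hu.continuousOn hf hx ht fun s hs =>
    hF (x, s) ⟨hx, hs.1⟩

end EulerMaps

theorem mapsTo_pgf_Icc {p : ℕ → ℝ} (hp_nonneg : ∀ j, 0 ≤ p j) (hp_sum : HasSum p 1) :
    MapsTo (pgf p) (Icc 0 1) (Icc 0 1) := by
  intro z hz
  have hterm_nonneg : ∀ j, 0 ≤ p j * z ^ j := fun j => mul_nonneg (hp_nonneg j) (pow_nonneg hz.1 j)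
  have hterm_le : ∀ j, p j * z ^ j ≤ p j := fun j =>
    mul_le_of_le_one_right (hp_nonneg j) (pow_le_one₀ hz.1 hz.2)
  refine ⟨tsum_nonneg hterm_nonneg, ?_⟩
  calc pgf p z ≤ ∑' j, p j :=
        (hp_sum.summable.of_nonneg_of_le hterm_nonneg hterm_le).tsum_le_tsum hterm_le
          hp_sum.summable
    _ = 1 := hp_sum.tsum_eq

section CompactStateSpace

variable {ι E : Type*} [NormedAddCommGroup E] [NormedSpace ℝ E] {l : Filter ι} {u : E → E}
  {K : Set E} {L : ℝ≥0} {γ : ι → ℝ} {f : ι → E → E}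

theorem eventually_isApproxEulerMap (hK : IsCompact K) (hu : ContinuousOn u K)
    (hf : ∀ k, MapsTo (f k) K K) (hγ : Tendsto γ l atTop)
    (hunif : TendstoUniformlyOn (fun k => rescaledIncrement (γ k) (f k)) u l K) {ε : ℝ}
    (hε : 0 < ε) : ∀ᶠ k in l, IsApproxEulerMap u K ε (γ k) (f k) := by
  obtain ⟨M, hM⟩ := hK.exists_bound_of_continuousOn hu
  filter_upwards [hγ.eventually_gt_atTop 0, hγ.eventually_ge_atTop ((M + ε) / ε),
    Metric.tendstoUniformlyOn_iff.1 hunif ε hε] with k hγ_pos hγ_large hk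
  have hclose : ∀ y ∈ K, ‖rescaledIncrement (γ k) (f k) y - u y‖ ≤ ε := fun y hy => by
    rw [← dist_eq_norm, dist_comm]; exact (hk y hy).le
  refine ⟨hγ_pos, hf k, hclose, fun y hy => le_of_mul_le_mul_left ?_ hγ_pos⟩
  calc γ k * ‖f k y - y‖ = ‖rescaledIncrement (γ k) (f k) y‖ :=
        (norm_smul_of_nonneg hγ_pos.le _).symm
    _ ≤ M + ε := (norm_le_norm_add_norm_sub' _ _).trans (add_le_add (hM y hy) (hclose y hy))
    _ ≤ γ k * ε := (div_le_iff₀ hε).1 hγ_large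

theorem iterated_pgf_uniform_convergence_general [CompleteSpace E] [l.NeBot]
    [l.IsCountablyGenerated] (hK : IsCompact K) (hf : ∀ k, MapsTo (f k) K K)
    (hγ : Tendsto γ l atTop) (hLip : ∀ k, LipschitzOnWith L (rescaledIncrement (γ k) (f k)) K)
    (hconv : ∀ x ∈ K, Tendsto (fun k => rescaledIncrement (γ k) (f k) x) l (𝓝 (u x))) :
    ∃ F : E × ℝ → E,
      (∀ c, TendstoUniformlyOn (fun k (xt : E × ℝ) => rescaledIterate (γ k) (f k) xt.1 xt.2) F l
        (K ×ˢ Icc 0 c)) ∧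
      ∀ x ∈ K, ∀ t, 0 ≤ t → F (x, t) = x + ∫ s in 0..t, u (F (x, s)) := by
  have hu : LipschitzOnWith L u K := lipschitzOnWith_of_tendsto hLip hconv
  have hunif : TendstoUniformlyOn (fun k => rescaledIncrement (γ k) (f k)) u l K :=
    tendstoUniformlyOn_of_equicontinuousOn hK
      (LipschitzOnWith.uniformEquicontinuousOn _ L hLip).equicontinuousOn hconv
  exact exists_tendstoUniformlyOn_rescaledIterate hK.isClosed hu fun _ hε =>
    eventually_isApproxEulerMap hK hu.continuousOn hf hγ hunif hε

end CompactStateSpace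

/-- Under conditions (A) and (B), for any `c > 0` the functions
`F_k(z,t) = g_k^{∘⌊γ_k t⌋}(z)` converge uniformly on `[0, e^{-c}] × [0, c]` to a
limit `F`, and the limit satisfies `F(z,t) = z + ∫_0^t u(F(z,r)) dr` there. -/
theorem iterated_pgf_uniform_convergence
    (p : ℕ → ℕ → ℝ) (γ : ℕ → ℝ) (u : ℝ → ℝ)
    (hp_nonneg : ∀ k j, 0 ≤ p k j)
    (hp_sum : ∀ k, HasSum (p k) 1)
    (hγ_pos : ∀ k, 0 < γ k)
    -- Condition (A)
    (hA : Tendsto γ atTop atTop)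
    -- Condition (B)
    (hLip : ∃ L : NNReal, ∀ k,
      LipschitzOnWith L (fun z => γ k * (pgf (p k) z - z)) (Icc (0:ℝ) 1))
    (hu_cont : ContinuousOn u (Icc (0:ℝ) 1))
    (hconv : ∀ z ∈ Icc (0:ℝ) 1,
      Tendsto (fun k => γ k * (pgf (p k) z - z)) atTop (nhds (u z)))
    (c : ℝ) (hc : 0 < c) :
    ∃ F : ℝ × ℝ → ℝ,
      TendstoUniformlyOn
        (fun k (zt : ℝ × ℝ) => (pgf (p k))^[⌊γ k * zt.2⌋₊] zt.1)
        F atTop (Icc (0:ℝ) (Real.exp (-c)) ×ˢ Icc (0:ℝ) c) ∧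
      ∀ z ∈ Icc (0:ℝ) (Real.exp (-c)), ∀ t ∈ Icc (0:ℝ) c,
        F (z, t) = z + ∫ r in (0:ℝ)..t, u (F (z, r)) := by
  obtain ⟨L, hL⟩ := hLip
  obtain ⟨F, hF, hF_integral⟩ := iterated_pgf_uniform_convergence_general isCompact_Icc
    (fun k => mapsTo_pgf_Icc (hp_nonneg k) (hp_sum k)) hA hL hconv
  have hsub : Icc 0 (Real.exp (-c)) ⊆ Icc 0 1 :=
    Icc_subset_Icc_right (Real.exp_le_one_iff.2 (neg_nonpos.2 hc.le))
  exact ⟨F, (hF c).mono (prod_mono_left hsub), fun z hz t ht => hF_integral z (hsub hz) t ht.1⟩
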